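/- arXiv:2008.08675 — 2 statements merged into one kernel-verified Lean document; each statement's English description precedes it below -/
import Mathlib

section
/- Let f be a one-hidden-layer network of width n with activation σ measurable and polynomially bounded. For inputs x_1, x_2, x_3, x_4 ∈ ℝ^{d_0}, set K_{ab} = E_{w∼N(0,I_{d_0})}[σ(d_0^{-1/2} w·x_a) σ(d_0^{-1/2} w·x_b)] and M = E_{w∼N(0,I_{d_0})}[Π_{a=1}^{4} σ(d_0^{-1/2} w·x_a)]. Then for all n ≥ 1, E_θ[f(x_1) f(x_2) f(x_3) f(x_4)] = (1 − 1/n)(K_{12}K_{34} + K_{13}K_{24} + K_{14}K_{23}) + (3/n) M. -/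
open MeasureTheory ProbabilityTheory

namespace OneHiddenLayer

/-- Parameter index type for a one-hidden-layer network of width `n` on inputs in `ℝ^{d0}`:
the input weight vectors `w_i` (`Fin n × Fin d0`) and the readout weights `v_i` (`Fin n`). -/
abbrev Param (d0 n : ℕ) : Type := (Fin n × Fin d0) ⊕ Fin n

/-- The one-hidden-layer network `f(x) = n^{-1/2} Σ_i v_i σ(d0^{-1/2} w_i ⬝ x)`. -/
noncomputable def net (σ : ℝ → ℝ) (d0 n : ℕ) (θ : Param d0 n → ℝ) (x : Fin d0 → ℝ) : ℝ :=
  (Real.sqrt (n : ℝ))⁻¹ * ∑ i : Fin n, θ (.inr i) *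
    σ ((Real.sqrt (d0 : ℝ))⁻¹ * ∑ j : Fin d0, θ (.inl (i, j)) * x j)

/-- All parameters are i.i.d. standard Gaussians. -/
noncomputable def gaussParam (d0 n : ℕ) : Measure (Param d0 n → ℝ) :=
  Measure.pi fun _ => gaussianReal 0 1

/-- A single standard Gaussian vector `w ∼ N(0, I_{d0})`. -/
noncomputable def gaussVec (d0 : ℕ) : Measure (Fin d0 → ℝ) :=
  Measure.pi fun _ => gaussianReal 0 1

/-- The neural tangent kernel `Θ(x,x') = Σ_μ ∂f(x)/∂θ_μ ⬝ ∂f(x')/∂θ_μ`. -/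
noncomputable def NTK (σ : ℝ → ℝ) (d0 n : ℕ) (θ : Param d0 n → ℝ) (x x' : Fin d0 → ℝ) : ℝ :=
  ∑ μ : Param d0 n,
    fderiv ℝ (fun θ' => net σ d0 n θ' x) θ (Pi.single μ 1) *
    fderiv ℝ (fun θ' => net σ d0 n θ' x') θ (Pi.single μ 1)

/-- The kernel `K_{ab} = E_w[σ(d0^{-1/2} w⬝x_a) σ(d0^{-1/2} w⬝x_b)]`. -/
noncomputable def Kker (σ : ℝ → ℝ) (d0 : ℕ) (x x' : Fin d0 → ℝ) : ℝ :=
  ∫ w, σ ((Real.sqrt (d0 : ℝ))⁻¹ * ∑ j : Fin d0, w j * x j) *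
    σ ((Real.sqrt (d0 : ℝ))⁻¹ * ∑ j : Fin d0, w j * x' j) ∂(gaussVec d0)

/-!
The outputs at the four inputs form a normalized sum of `n` i.i.d. centered random vectors, one per
neuron. For centered vectors the second moments and the fourth joint cumulant
`κ₄ = E[X₀X₁X₂X₃] - (sum over the three pairings)` are additive over independent summands: in the
expansion of the fourth moment of `X + Y` the splittings `1 + 3` vanish, and the splittings `2 + 2`
are the cross terms of the pairing sum. Hence the four-point function is the pairing sum of the
second moments plus `κ₄ / n` of a single neuron. For a neuron `v σ(w ⬝ x)`, `E v² = 1` and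
`E v⁴ = 3` give second moments `K` and `κ₄ = 3 M - (K₁₂K₃₄ + K₁₃K₂₄ + K₁₄K₂₃)`.
-/

section Integrability

variable {Ω Ω' : Type*} [MeasurableSpace Ω] [MeasurableSpace Ω'] {μ : Measure Ω}
  {ν : Measure Ω'} {p : ENNReal}

lemma memLp_pow [IsFiniteMeasure μ] {f : Ω → ℝ} {r : ℕ} (hf : MemLp f (r * p) μ) :
    MemLp (fun ω => f ω ^ r) p μ := by
  rcases eq_or_ne r 0 with rfl | hr
  · simpa using memLp_const (1 : ℝ)
  have hexp : (r * (r * p)⁻¹)⁻¹ = p := by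
    rw [ENNReal.mul_inv (.inl (by simpa)) (.inl (by simp)), inv_inv, ← mul_assoc,
      ENNReal.inv_mul_cancel (by simpa) (by simp), one_mul]
  simpa [hexp] using MemLp.prod' (s := Finset.range r) fun _ _ => hf

lemma memLp_comp_of_polynomial_growth [IsFiniteMeasure μ] {f : Ω → ℝ}
    (hf : ∀ q ≠ ⊤, MemLp f q μ) {σ : ℝ → ℝ} (hσm : Measurable σ)
    (hσp : ∃ C : ℝ, ∃ r : ℕ, ∀ t : ℝ, |σ t| ≤ C * (1 + |t|) ^ r) (hp : p ≠ ⊤) :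
    MemLp (fun ω => σ (f ω)) p μ := by
  obtain ⟨C, r, hσ⟩ := hσp
  have hf0 : AEMeasurable f μ := (hf 0 ENNReal.zero_ne_top).aestronglyMeasurable.aemeasurable
  have hbase : MemLp (fun ω => 1 + |f ω|) (r * p) μ :=
    (memLp_const (1 : ℝ)).add (hf (r * p) (by finiteness)).abs
  have hdom : MemLp (fun ω => C * (1 + |f ω|) ^ r) p μ := (memLp_pow hbase).const_mul C
  exact hdom.mono' (hσm.comp_aemeasurable hf0).aestronglyMeasurable (.of_forall fun ω => hσ (f ω))

lemma memLp_fst_smul_snd [SFinite ν] {E : Type*} [NormedAddCommGroup E] [NormedSpace ℝ E]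
    {f : Ω → ℝ} {g : Ω' → E} (hf : MemLp f p μ) (hg : MemLp g p ν) (hp0 : p ≠ 0) (hp : p ≠ ⊤) :
    MemLp (fun z : Ω × Ω' => f z.1 • g z.2) p (μ.prod ν) := by
  have hmeas : AEStronglyMeasurable (fun z : Ω × Ω' => f z.1 • g z.2) (μ.prod ν) :=
    hf.aestronglyMeasurable.comp_fst.smul hg.aestronglyMeasurable.comp_snd
  rw [← integrable_norm_rpow_iff hmeas hp0 hp]
  simp only [norm_smul, Real.mul_rpow (norm_nonneg _) (norm_nonneg _)]
  exact (hf.integrable_norm_rpow hp0 hp).mul_prod (hg.integrable_norm_rpow hp0 hp)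

lemma identDistrib_eval_pi {κ : Type*} [Fintype κ] {Ω : κ → Type*} [∀ i, MeasurableSpace (Ω i)]
    {μ : ∀ i, Measure (Ω i)} [∀ i, IsProbabilityMeasure (μ i)] {E : Type*} [MeasurableSpace E]
    (i : κ) {f : Ω i → E} (hf : AEMeasurable f (μ i)) :
    IdentDistrib (fun ω => f (ω i)) f (Measure.pi μ) (μ i) := by
  have heval := measurePreserving_eval μ i
  have hid : IdentDistrib (Function.eval i) id (Measure.pi μ) (μ i) :=
    ⟨heval.aemeasurable, aemeasurable_id, by rw [heval.map_eq, Measure.map_id]⟩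
  exact hid.comp_of_aemeasurable (by rwa [heval.map_eq])

end Integrability

section JointMoment

variable {Ω Ω' ι : Type*} [MeasurableSpace Ω] [MeasurableSpace Ω'] {μ : Measure Ω}
  {ν : Measure Ω'} {X Y : Ω → ι → ℝ} {s : Finset ι} {p : ENNReal}

/-- The mixed moment `E[∏_{a ∈ s} X_a]` of the coordinates in `s` of a random vector `X`. -/
noncomputable def jointMoment (X : Ω → ι → ℝ) (μ : Measure Ω) (s : Finset ι) : ℝ :=
  ∫ ω, ∏ a ∈ s, X ω a ∂μ

lemma jointMoment_empty [IsProbabilityMeasure μ] (X : Ω → ι → ℝ) : jointMoment X μ ∅ = 1 := by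
  simp [jointMoment]

lemma jointMoment_zero_left (hs : s.Nonempty) : jointMoment (0 : Ω → ι → ℝ) μ s = 0 := by
  simp [jointMoment, hs.card_ne_zero]

lemma jointMoment_smul (c : ℝ) (X : Ω → ι → ℝ) (s : Finset ι) :
    jointMoment (c • X) μ s = c ^ s.card * jointMoment X μ s := by
  simp [jointMoment, Finset.prod_mul_distrib, integral_const_mul]

lemma jointMoment_congr_identDistrib {Y : Ω' → ι → ℝ} (h : IdentDistrib X Y μ ν) :
    jointMoment X μ = jointMoment Y ν :=
  funext fun s => (h.comp (u := fun y : ι → ℝ => ∏ a ∈ s, y a) (by fun_prop)).integral_eq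

variable [Fintype ι]

lemma jointMoment_eq_zero_of_card_eq_one (hX : Integrable X μ) (hX0 : ∫ ω, X ω ∂μ = 0)
    (hs : s.card = 1) : jointMoment X μ s = 0 := by
  obtain ⟨a, rfl⟩ := Finset.card_eq_one.1 hs
  simp [jointMoment, ← eval_integral hX.eval, hX0]

lemma integrable_prod_of_memLp [IsFiniteMeasure μ] (hX : MemLp X p μ) (hp : s.card ≤ p) :
    Integrable (fun ω => ∏ a ∈ s, X ω a) μ := by
  refine (MemLp.prod' fun a _ => hX.eval a).integrable (ENNReal.one_le_inv.2 ?_)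
  rw [Finset.sum_const, nsmul_eq_mul, ← div_eq_mul_inv]
  exact ENNReal.div_le_of_le_mul (by simpa using hp)

lemma jointMoment_add [DecidableEq ι] [IsFiniteMeasure μ] (hXY : IndepFun X Y μ)
    (hX : MemLp X p μ) (hY : MemLp Y p μ) (hp : s.card ≤ p) :
    jointMoment (X + Y) μ s = ∑ t ∈ s.powerset, jointMoment X μ t * jointMoment Y μ (s \ t) := by
  have measurable_prod (t : Finset ι) : Measurable fun y : ι → ℝ => ∏ a ∈ t, y a := by fun_prop
  have card_le {t : Finset ι} (ht : t ⊆ s) : (t.card : ENNReal) ≤ p :=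
    (Nat.cast_le.2 (Finset.card_le_card ht)).trans hp
  simp only [jointMoment, Pi.add_apply, Finset.prod_add]
  rw [integral_finsetSum]
  · exact Finset.sum_congr rfl fun t _ => hXY.integral_fun_comp_mul_comp
      hX.aestronglyMeasurable.aemeasurable hY.aestronglyMeasurable.aemeasurable
      (measurable_prod t).aestronglyMeasurable (measurable_prod (s \ t)).aestronglyMeasurable
  · intro t ht
    exact (hXY.comp (measurable_prod t) (measurable_prod (s \ t))).integrable_mul
      (integrable_prod_of_memLp hX (card_le (Finset.mem_powerset.1 ht)))
      (integrable_prod_of_memLp hY (card_le Finset.sdiff_subset))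

lemma jointMoment_add_of_card_eq_two [IsProbabilityMeasure μ] (hXY : IndepFun X Y μ)
    (hX : MemLp X 2 μ) (hY : MemLp Y 2 μ) (hX0 : ∫ ω, X ω ∂μ = 0) (hs : s.card = 2) :
    jointMoment (X + Y) μ s = jointMoment X μ s + jointMoment Y μ s := by
  classical
  have hne : ∅ ≠ s := by
    rintro rfl
    simp at hs
  rw [jointMoment_add hXY hX hY (by simp [hs]),
    Finset.sum_eq_add_of_mem ∅ s (Finset.empty_mem_powerset s) (Finset.mem_powerset_self s) hne]
  · simp [jointMoment_empty, add_comm]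
  · rintro t ht ⟨ht_ne, hts_ne⟩
    have ht_pos : 0 < t.card := (Finset.nonempty_iff_ne_empty.2 ht_ne).card_pos
    have ht_lt : t.card < s.card :=
      Finset.card_lt_card ((Finset.mem_powerset.1 ht).ssubset_of_ne hts_ne)
    rw [jointMoment_eq_zero_of_card_eq_one (hX.integrable one_le_two) hX0 (by omega), zero_mul]

lemma jointMoment_sum_of_card_eq_two [IsProbabilityMeasure μ] {κ : Type*} {X : κ → Ω → ι → ℝ}
    (hX : iIndepFun X μ) (hL : ∀ i, MemLp (X i) 2 μ) (h0 : ∀ i, ∫ ω, X i ω ∂μ = 0)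
    (I : Finset κ) (hs : s.card = 2) :
    jointMoment (∑ i ∈ I, X i) μ s = ∑ i ∈ I, jointMoment (X i) μ s := by
  classical
  induction I using Finset.induction_on with
  | empty => simp [jointMoment_zero_left (Finset.card_pos.1 (hs ▸ two_pos))]
  | insert i I hi ih =>
    have hind : IndepFun (X i) (∑ j ∈ I, X j) μ :=
      (hX.indepFun_finsetSum_of_notMem₀ (fun j => (hL j).aestronglyMeasurable.aemeasurable) hi).symm
    rw [Finset.sum_insert hi, Finset.sum_insert hi, jointMoment_add_of_card_eq_two hind (hL i)
      (memLp_finsetSum' I fun j _ => hL j) (h0 i) hs, ih]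

end JointMoment

section FourthCumulant

variable {Ω Ω' : Type*} [MeasurableSpace Ω] [MeasurableSpace Ω'] {μ : Measure Ω}
  {ν : Measure Ω'} {X Y : Ω → Fin 4 → ℝ}

/-- The sum of `m P * m Q` over the three partitions of `Fin 4` into two pairs `P, Q`. For `m` the
joint moments of a centered Gaussian vector this is its fourth moment, by Wick's formula. -/
def pairingSum (m : Finset (Fin 4) → ℝ) : ℝ :=
  m {0, 1} * m {2, 3} + m {0, 2} * m {1, 3} + m {0, 3} * m {1, 2}

/-- The joint cumulant of the coordinates of a four-dimensional random vector of mean zero.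
Without the mean-zero assumption the cumulant has further terms, omitted here. -/
noncomputable def fourthCumulant (X : Ω → Fin 4 → ℝ) (μ : Measure Ω) : ℝ :=
  jointMoment X μ .univ - pairingSum (jointMoment X μ)

lemma pairingSum_congr {m m' : Finset (Fin 4) → ℝ} (h : ∀ s, s.card = 2 → m s = m' s) :
    pairingSum m = pairingSum m' := by
  have h' (a b : Fin 4) (hab : a ≠ b) : m {a, b} = m' {a, b} := h _ (Finset.card_pair hab)
  simp [pairingSum, h']

lemma pairingSum_smul (c : ℝ) (m : Finset (Fin 4) → ℝ) :
    pairingSum (c • m) = c ^ 2 * pairingSum m := by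
  simp only [pairingSum, Pi.smul_apply, smul_eq_mul]
  ring

lemma sum_finset_fin_four {h : Finset (Fin 4) → ℝ}
    (hone : ∀ s, s.card = 1 → h s = 0) (hthree : ∀ s, sᶜ.card = 1 → h s = 0) :
    ∑ s, h s = h ∅ + h .univ
      + (h {0, 1} + h {2, 3} + h {0, 2} + h {1, 3} + h {0, 3} + h {1, 2}) := by
  have hsub : ∑ s ∈ {∅, .univ, {0, 1}, {2, 3}, {0, 2}, {1, 3}, {0, 3}, {1, 2}}, h s
      = ∑ s, h s := by
    refine Finset.sum_subset (Finset.subset_univ _) fun s _ hs => ?_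
    have : s.card = 1 ∨ sᶜ.card = 1 := by decide +revert
    exact this.elim (hone s) (hthree s)
  rw [← hsub]
  repeat rw [Finset.sum_insert (by decide)]
  rw [Finset.sum_singleton]
  ring

lemma fourthCumulant_zero : fourthCumulant (0 : Ω → Fin 4 → ℝ) μ = 0 := by
  simp [fourthCumulant, pairingSum, jointMoment_zero_left]

lemma fourthCumulant_congr_identDistrib {Y : Ω' → Fin 4 → ℝ} (h : IdentDistrib X Y μ ν) :
    fourthCumulant X μ = fourthCumulant Y ν := by
  rw [fourthCumulant, jointMoment_congr_identDistrib h, fourthCumulant]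

lemma fourthCumulant_smul (c : ℝ) (X : Ω → Fin 4 → ℝ) :
    fourthCumulant (c • X) μ = c ^ 4 * fourthCumulant X μ := by
  have hpair : pairingSum (jointMoment (c • X) μ) = pairingSum (c ^ 2 • jointMoment X μ) :=
    pairingSum_congr fun s hs => by simp [jointMoment_smul, hs]
  rw [fourthCumulant, hpair, pairingSum_smul, jointMoment_smul, fourthCumulant]
  simp only [Finset.card_univ, Fintype.card_fin]
  ring

lemma fourthCumulant_add [IsProbabilityMeasure μ] (hXY : IndepFun X Y μ)
    (hX : MemLp X 4 μ) (hY : MemLp Y 4 μ) (hX0 : ∫ ω, X ω ∂μ = 0) (hY0 : ∫ ω, Y ω ∂μ = 0) :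
    fourthCumulant (X + Y) μ = fourthCumulant X μ + fourthCumulant Y μ := by
  have hpair : pairingSum (jointMoment (X + Y) μ)
      = pairingSum (jointMoment X μ + jointMoment Y μ) :=
    pairingSum_congr fun s hs => jointMoment_add_of_card_eq_two hXY
      (hX.mono_exponent (by norm_num)) (hY.mono_exponent (by norm_num)) hX0 hs
  have hfour : jointMoment (X + Y) μ .univ = ∑ t, jointMoment X μ t * jointMoment Y μ tᶜ := by
    simpa [Finset.compl_eq_univ_sdiff] using jointMoment_add (s := .univ) hXY hX hY (by simp)
  have one_le_four : (1 : ENNReal) ≤ 4 := by norm_num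
  rw [sum_finset_fin_four
    (fun s hs => by
      rw [jointMoment_eq_zero_of_card_eq_one (hX.integrable one_le_four) hX0 hs, zero_mul])
    (fun s hs => by
      rw [jointMoment_eq_zero_of_card_eq_one (hY.integrable one_le_four) hY0 hs, mul_zero])]
    at hfour
  have compl_pairs : ({0, 1} : Finset (Fin 4))ᶜ = {2, 3} ∧ ({2, 3} : Finset (Fin 4))ᶜ = {0, 1} ∧
      ({0, 2} : Finset (Fin 4))ᶜ = {1, 3} ∧ ({1, 3} : Finset (Fin 4))ᶜ = {0, 2} ∧
      ({0, 3} : Finset (Fin 4))ᶜ = {1, 2} ∧ ({1, 2} : Finset (Fin 4))ᶜ = {0, 3} := by decide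
  simp only [compl_pairs, Finset.compl_empty, Finset.compl_univ, jointMoment_empty] at hfour
  rw [fourthCumulant, hfour, hpair]
  simp only [fourthCumulant, pairingSum, Pi.add_apply]
  ring

lemma fourthCumulant_sum [IsProbabilityMeasure μ] {κ : Type*} {X : κ → Ω → Fin 4 → ℝ}
    (hX : iIndepFun X μ) (hL : ∀ i, MemLp (X i) 4 μ) (h0 : ∀ i, ∫ ω, X i ω ∂μ = 0)
    (I : Finset κ) :
    fourthCumulant (∑ i ∈ I, X i) μ = ∑ i ∈ I, fourthCumulant (X i) μ := by
  classical
  induction I using Finset.induction_on with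
  | empty => simp [fourthCumulant_zero]
  | insert i I hi ih =>
    have hind : IndepFun (X i) (∑ j ∈ I, X j) μ :=
      (hX.indepFun_finsetSum_of_notMem₀ (fun j => (hL j).aestronglyMeasurable.aemeasurable) hi).symm
    have hsum0 : ∫ ω, (∑ j ∈ I, X j) ω ∂μ = 0 := by
      simp only [Finset.sum_apply]
      rw [integral_finsetSum I fun j _ => (hL j).integrable (by norm_num)]
      exact Finset.sum_eq_zero fun j _ => h0 j
    rw [Finset.sum_insert hi, Finset.sum_insert hi, fourthCumulant_add hind (hL i)
      (memLp_finsetSum' I fun j _ => hL j) (h0 i) hsum0, ih]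

theorem jointMoment_univ_normalized_sum [IsProbabilityMeasure μ] {κ : Type*} [Fintype κ]
    [Nonempty κ] {X : κ → Ω → Fin 4 → ℝ} {Y : Ω' → Fin 4 → ℝ} (hX : iIndepFun X μ)
    (hXY : ∀ i, IdentDistrib (X i) Y μ ν) (hY : MemLp Y 4 ν) (hY0 : ∫ ω, Y ω ∂ν = 0) :
    jointMoment ((√(Fintype.card κ))⁻¹ • ∑ i, X i) μ .univ
      = pairingSum (jointMoment Y ν) + (Fintype.card κ : ℝ)⁻¹ * fourthCumulant Y ν := by
  set N : ℝ := (Fintype.card κ : ℝ) with hN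
  have hN0 : N ≠ 0 := by simp [hN]
  have hsq : (√N)⁻¹ ^ 2 = N⁻¹ := by rw [inv_pow, Real.sq_sqrt (Nat.cast_nonneg _)]
  have hL (i : κ) : MemLp (X i) 4 μ := (hXY i).memLp_iff.2 hY
  have h0 (i : κ) : ∫ ω, X i ω ∂μ = 0 := (hXY i).integral_eq.trans hY0
  have hpair : pairingSum (jointMoment ((√N)⁻¹ • ∑ i, X i) μ) = pairingSum (jointMoment Y ν) :=
    pairingSum_congr fun s hs => by
      rw [jointMoment_smul, hs, hsq, jointMoment_sum_of_card_eq_two hX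
        (fun i => (hL i).mono_exponent (by norm_num)) h0 _ hs]
      simp [jointMoment_congr_identDistrib (hXY _), ← hN, hN0]
  have hcum : fourthCumulant ((√N)⁻¹ • ∑ i, X i) μ = N⁻¹ * fourthCumulant Y ν := by
    rw [fourthCumulant_smul, fourthCumulant_sum hX hL h0]
    simp only [fourthCumulant_congr_identDistrib (hXY _), Finset.sum_const, Finset.card_univ,
      nsmul_eq_mul, ← hN]
    rw [show (√N)⁻¹ ^ 4 = ((√N)⁻¹ ^ 2) ^ 2 by ring, hsq]
    field_simp
  rw [← hcum, ← hpair, fourthCumulant]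
  ring

end FourthCumulant

section Gaussian

open scoped NNReal

-- The moment generating function satisfies `dM/dt = v t M`; differentiate `k + 1` times at `0`.
lemma integral_pow_add_two_gaussianReal (v : ℝ≥0) (k : ℕ) :
    ∫ x, x ^ (k + 2) ∂(gaussianReal 0 v) = (k + 1) * v * ∫ x, x ^ k ∂(gaussianReal 0 v) := by
  have hmoment (m : ℕ) : ∫ x, x ^ m ∂(gaussianReal 0 v)
      = iteratedDeriv m (fun t : ℝ => Real.exp (v * t ^ 2 / 2)) 0 := by
    have h := iteratedDeriv_mgf_zero (X := fun x : ℝ => x) (μ := gaussianReal 0 v) (by simp) m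
    simpa [mgf_fun_id_gaussianReal] using h.symm
  have hderiv : deriv (fun t : ℝ => Real.exp (v * t ^ 2 / 2))
      = fun t => v * (t * Real.exp (v * t ^ 2 / 2)) := by
    ext t
    rw [((((hasDerivAt_pow 2 t).const_mul (v : ℝ)).div_const 2).exp).deriv]
    ring
  rw [hmoment, hmoment, iteratedDeriv_succ', hderiv, iteratedDeriv_const_mul_field,
    iteratedDeriv_fun_mul (by fun_prop) (by fun_prop)]
  simp only [iteratedDeriv_fun_id_zero, mul_ite, mul_one, mul_zero, ite_mul, zero_mul,
    Finset.sum_ite_eq', Finset.mem_range, lt_add_iff_pos_left, Order.lt_add_one_iff, zero_le,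
    ↓reduceIte, Nat.choose_one_right, Nat.cast_add, Nat.cast_one, add_tsub_cancel_right]
  ring

lemma integral_pow_two_gaussianReal (v : ℝ≥0) : ∫ x, x ^ 2 ∂(gaussianReal 0 v) = v := by
  simpa using integral_pow_add_two_gaussianReal v 0

lemma integral_pow_four_gaussianReal (v : ℝ≥0) :
    ∫ x, x ^ 4 ∂(gaussianReal 0 v) = 3 * v ^ 2 := by
  rw [integral_pow_add_two_gaussianReal v 2, integral_pow_two_gaussianReal]
  push_cast
  ring

end Gaussian

section RandomFeatures

variable {W ι : Type*} [MeasurableSpace W] {ρ : Measure W}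

lemma jointMoment_fst_smul_snd [SFinite ρ] (γ : Measure ℝ) [SFinite γ] (φ : W → ι → ℝ)
    (s : Finset ι) :
    jointMoment (fun z : ℝ × W => z.1 • φ z.2) (γ.prod ρ) s
      = (∫ v, v ^ s.card ∂γ) * jointMoment φ ρ s := by
  simp only [jointMoment, Pi.smul_apply, smul_eq_mul, Finset.prod_mul_distrib, Finset.prod_const]
  exact integral_prod_mul (fun v : ℝ => v ^ s.card) fun w => ∏ a ∈ s, φ w a

variable {φ : W → Fin 4 → ℝ}

lemma pairingSum_jointMoment_gaussian_smul [SFinite ρ] :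
    pairingSum (jointMoment (fun z : ℝ × W => z.1 • φ z.2) ((gaussianReal 0 1).prod ρ))
      = pairingSum (jointMoment φ ρ) :=
  pairingSum_congr fun s hs => by
    simp [jointMoment_fst_smul_snd, hs, integral_pow_two_gaussianReal]

lemma fourthCumulant_gaussian_smul [SFinite ρ] :
    fourthCumulant (fun z : ℝ × W => z.1 • φ z.2) ((gaussianReal 0 1).prod ρ)
      = 3 * jointMoment φ ρ .univ - pairingSum (jointMoment φ ρ) := by
  rw [fourthCumulant, pairingSum_jointMoment_gaussian_smul, jointMoment_fst_smul_snd]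
  simp [integral_pow_four_gaussianReal]

theorem jointMoment_normalized_sum_gaussian_smul [IsProbabilityMeasure ρ] (κ : Type*) [Fintype κ]
    [Nonempty κ] (hφ : MemLp φ 4 ρ) :
    jointMoment ((√(Fintype.card κ))⁻¹ • ∑ i, fun ω : κ → ℝ × W => (ω i).1 • φ (ω i).2)
        (Measure.pi fun _ => (gaussianReal 0 1).prod ρ) .univ
      = (1 - (Fintype.card κ : ℝ)⁻¹) * pairingSum (jointMoment φ ρ)
        + 3 * (Fintype.card κ : ℝ)⁻¹ * jointMoment φ ρ .univ := by
  set Y : ℝ × W → Fin 4 → ℝ := fun z => z.1 • φ z.2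
  set γ := (gaussianReal 0 1).prod ρ
  have hY : MemLp Y 4 γ :=
    memLp_fst_smul_snd (memLp_id_gaussianReal' 4 (by simp)) hφ (by simp) (by simp)
  have hY0 : ∫ z, Y z ∂γ = 0 := by
    rw [integral_prod_smul (fun v : ℝ => v) φ, integral_id_gaussianReal, zero_smul]
  have hYm : AEMeasurable Y γ := hY.aestronglyMeasurable.aemeasurable
  rw [jointMoment_univ_normalized_sum (iIndepFun_pi fun _ => hYm)
      (fun i => identDistrib_eval_pi (μ := fun _ => γ) i hYm) hY hY0,
    pairingSum_jointMoment_gaussian_smul, fourthCumulant_gaussian_smul]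
  ring

end RandomFeatures

section Network

instance (d0 : ℕ) : IsProbabilityMeasure (gaussVec d0) := by
  unfold gaussVec
  infer_instance

/-- The post-activation `σ(d0^{-1/2} w ⬝ x)` of a hidden neuron with input weights `w`, in the
notation of `net` and `Kker`. -/
noncomputable def postActivation (σ : ℝ → ℝ) {d0 : ℕ} (w x : Fin d0 → ℝ) : ℝ :=
  σ ((Real.sqrt (d0 : ℝ))⁻¹ * ∑ j : Fin d0, w j * x j)

lemma memLp_sum_mul_gaussVec {d0 : ℕ} (x : Fin d0 → ℝ) {p : ENNReal} (hp : p ≠ ⊤) :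
    MemLp (fun w => ∑ j, w j * x j) p (gaussVec d0) :=
  memLp_finsetSum _ fun j _ => ((memLp_id_gaussianReal' p hp).comp_measurePreserving
    (measurePreserving_eval (fun _ : Fin d0 => gaussianReal 0 1) j)).mul_const (x j)

lemma memLp_postActivation {σ : ℝ → ℝ} (hσm : Measurable σ)
    (hσp : ∃ C : ℝ, ∃ r : ℕ, ∀ t : ℝ, |σ t| ≤ C * (1 + |t|) ^ r) {d0 : ℕ} (x : Fin d0 → ℝ)
    {p : ENNReal} (hp : p ≠ ⊤) :
    MemLp (fun w => postActivation σ w x) p (gaussVec d0) :=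
  memLp_comp_of_polynomial_growth (fun _ hq => (memLp_sum_mul_gaussVec x hq).const_mul _) hσm hσp hp

/-- The regrouping of the parameters neuron by neuron: the `i`-th neuron carries the pair
`(v_i, w_i)`. -/
def neuronsEquivParam (d0 n : ℕ) : (Fin n → ℝ × (Fin d0 → ℝ)) ≃ᵐ (Param d0 n → ℝ) where
  toFun ω := Sum.elim (fun ij => (ω ij.1).2 ij.2) fun i => (ω i).1
  invFun θ i := (θ (.inr i), fun j => θ (.inl (i, j)))
  left_inv _ := rfl
  right_inv θ := by ext (_ | _) <;> rfl
  measurable_toFun := measurable_pi_lambda _ fun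
    | .inl (i, j) => (measurable_pi_apply j).comp (measurable_snd.comp (measurable_pi_apply i))
    | .inr i => measurable_fst.comp (measurable_pi_apply i)
  measurable_invFun := measurable_pi_lambda _ fun _ =>
    (measurable_pi_apply _).prodMk (measurable_pi_lambda _ fun _ => measurable_pi_apply _)

@[simp]
lemma neuronsEquivParam_inl {d0 n : ℕ} (ω : Fin n → ℝ × (Fin d0 → ℝ)) (i : Fin n) (j : Fin d0) :
    neuronsEquivParam d0 n ω (.inl (i, j)) = (ω i).2 j :=
  rfl

@[simp]
lemma neuronsEquivParam_inr {d0 n : ℕ} (ω : Fin n → ℝ × (Fin d0 → ℝ)) (i : Fin n) :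
    neuronsEquivParam d0 n ω (.inr i) = (ω i).1 :=
  rfl

lemma measurePreserving_neuronsEquivParam (d0 n : ℕ) :
    MeasurePreserving (neuronsEquivParam d0 n)
      (Measure.pi fun _ => (gaussianReal 0 1).prod (gaussVec d0)) (gaussParam d0 n) := by
  refine ⟨(neuronsEquivParam d0 n).measurable, (Measure.pi_eq fun s _ => ?_).symm⟩
  have hbox : neuronsEquivParam d0 n ⁻¹' Set.univ.pi s
      = Set.univ.pi fun i => s (.inr i) ×ˢ Set.univ.pi fun j => s (.inl (i, j)) := by
    ext ω
    simp [forall_and, and_comm]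
  rw [MeasurableEquiv.map_apply, hbox, Measure.pi_pi]
  simp only [gaussVec, Measure.prod_prod, Measure.pi_pi, Finset.prod_mul_distrib,
    Fintype.prod_sum_type, Fintype.prod_prod_type]
  rw [mul_comm]

lemma net_neuronsEquivParam (σ : ℝ → ℝ) {d0 n : ℕ} (ω : Fin n → ℝ × (Fin d0 → ℝ))
    (x : Fin d0 → ℝ) :
    net σ d0 n (neuronsEquivParam d0 n ω) x
      = (√n)⁻¹ * ∑ i, (ω i).1 * postActivation σ (ω i).2 x := by
  simp only [net, postActivation, neuronsEquivParam_inl, neuronsEquivParam_inr]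

lemma integral_prod_net_eq_jointMoment {ι : Type*} [Fintype ι] (σ : ℝ → ℝ) {d0 : ℕ} (n : ℕ)
    (x : ι → Fin d0 → ℝ) :
    ∫ θ, ∏ a, net σ d0 n θ (x a) ∂(gaussParam d0 n)
      = jointMoment ((√n)⁻¹ • ∑ i, fun ω : Fin n → ℝ × (Fin d0 → ℝ) =>
          (ω i).1 • fun a => postActivation σ (ω i).2 (x a))
        (Measure.pi fun _ => (gaussianReal 0 1).prod (gaussVec d0)) .univ := by
  rw [← (measurePreserving_neuronsEquivParam d0 n).integral_comp']
  simp [jointMoment, net_neuronsEquivParam]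

lemma pairingSum_jointMoment_postActivation (σ : ℝ → ℝ) {d0 : ℕ} (x : Fin 4 → Fin d0 → ℝ) :
    pairingSum (jointMoment (fun w a => postActivation σ w (x a)) (gaussVec d0))
      = Kker σ d0 (x 0) (x 1) * Kker σ d0 (x 2) (x 3)
        + Kker σ d0 (x 0) (x 2) * Kker σ d0 (x 1) (x 3)
        + Kker σ d0 (x 0) (x 3) * Kker σ d0 (x 1) (x 2) := by
  simp [pairingSum, jointMoment, Kker, postActivation]

theorem one_hidden_layer_four_point_general (σ : ℝ → ℝ) {d0 : ℕ} (x : Fin 4 → Fin d0 → ℝ)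
    (hσ : ∀ a, MemLp (fun w => postActivation σ w (x a)) 4 (gaussVec d0)) {n : ℕ} (hn : 1 ≤ n) :
    ∫ θ, ∏ a, net σ d0 n θ (x a) ∂(gaussParam d0 n)
      = (1 - 1 / (n : ℝ)) *
          (Kker σ d0 (x 0) (x 1) * Kker σ d0 (x 2) (x 3)
            + Kker σ d0 (x 0) (x 2) * Kker σ d0 (x 1) (x 3)
            + Kker σ d0 (x 0) (x 3) * Kker σ d0 (x 1) (x 2))
        + (3 / (n : ℝ)) * ∫ w, ∏ a, postActivation σ w (x a) ∂(gaussVec d0) := by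
  have : Nonempty (Fin n) := ⟨⟨0, hn⟩⟩
  have h := jointMoment_normalized_sum_gaussian_smul (Fin n) (MemLp.of_eval hσ)
  rw [Fintype.card_fin] at h
  rw [integral_prod_net_eq_jointMoment, h, pairingSum_jointMoment_postActivation, one_div,
    div_eq_mul_inv, jointMoment]

end Network

/-- exact four-point function of a one-hidden-layer network:
`E_θ[f(x₁)f(x₂)f(x₃)f(x₄)] = (1 - 1/n)(K₁₂K₃₄ + K₁₃K₂₄ + K₁₄K₂₃) + (3/n) M`. -/
theorem one_hidden_layer_four_point (σ : ℝ → ℝ) (hσm : Measurable σ)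
    (hσp : ∃ C : ℝ, ∃ r : ℕ, ∀ t : ℝ, |σ t| ≤ C * (1 + |t|) ^ r)
    (d0 : ℕ) (hd0 : 0 < d0) (x₁ x₂ x₃ x₄ : Fin d0 → ℝ) (n : ℕ) (hn : 1 ≤ n) :
    ∫ θ, net σ d0 n θ x₁ * net σ d0 n θ x₂ * net σ d0 n θ x₃ * net σ d0 n θ x₄
        ∂(gaussParam d0 n)
      = (1 - 1 / (n : ℝ)) *
          (Kker σ d0 x₁ x₂ * Kker σ d0 x₃ x₄ + Kker σ d0 x₁ x₃ * Kker σ d0 x₂ x₄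
            + Kker σ d0 x₁ x₄ * Kker σ d0 x₂ x₃)
        + (3 / (n : ℝ)) *
          ∫ w, σ ((Real.sqrt (d0 : ℝ))⁻¹ * ∑ j : Fin d0, w j * x₁ j) *
            σ ((Real.sqrt (d0 : ℝ))⁻¹ * ∑ j : Fin d0, w j * x₂ j) *
            σ ((Real.sqrt (d0 : ℝ))⁻¹ * ∑ j : Fin d0, w j * x₃ j) *
            σ ((Real.sqrt (d0 : ℝ))⁻¹ * ∑ j : Fin d0, w j * x₄ j) ∂(gaussVec d0) := by
  simpa [Fin.prod_univ_four, postActivation] using one_hidden_layer_four_point_general σ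
    ![x₁, x₂, x₃, x₄] (fun _ => memLp_postActivation hσm hσp _ (by simp)) hn

end OneHiddenLayer
end

section
/- Let f be a one-hidden-layer network of width n with smooth activation σ such that σ and all its derivatives are polynomially bounded. For fixed inputs x_1, x_2, x_3, x_4 ∈ ℝ^{d_0}, consider C = E_θ[ Σ_{μ,ν} (∂²f(x_1)/∂θ_μ∂θ_ν)(∂f(x_2)/∂θ_μ)(∂f(x_3)/∂θ_ν) f(x_4) ], where μ, ν each run over all parameter entries. Then there exists a constant K, independent of n, such that |C| ≤ K / n for all n ≥ 1. -/
open MeasureTheory ProbabilityTheory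

namespace OneHiddenLayer

/-- The correlation function
`C = E_θ[ Σ_{μ,ν} ∂²f(x₁)/∂θ_μ∂θ_ν ⬝ ∂f(x₂)/∂θ_μ ⬝ ∂f(x₃)/∂θ_ν ⬝ f(x₄) ]`. -/
noncomputable def corrDTheta (σ : ℝ → ℝ) (d0 n : ℕ) (x₁ x₂ x₃ x₄ : Fin d0 → ℝ) : ℝ :=
  ∫ θ, (∑ μ : Param d0 n, ∑ ν : Param d0 n,
      iteratedFDeriv ℝ 2 (fun θ' => net σ d0 n θ' x₁) θ ![Pi.single μ 1, Pi.single ν 1] *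
        fderiv ℝ (fun θ' => net σ d0 n θ' x₂) θ (Pi.single μ 1) *
        fderiv ℝ (fun θ' => net σ d0 n θ' x₃) θ (Pi.single ν 1) *
        net σ d0 n θ x₄) ∂(gaussParam d0 n)

/-!
Grouping the parameters by neuron, `θ ↦ f(x)` is `n^{-1/2} Σ_i g_x(θ_i)`, where `g_x` is the network
of width one and the blocks `θ_i` are i.i.d. The Hessian of such a sum is block diagonal, so the
Hessian of `f(x₁)` contracted with the gradients of `f(x₂)` and `f(x₃)` is
`n^{-3/2} Σ_i H(θ_i)`, where `H` is the same contraction for `g_{x₁}, g_{x₂}, g_{x₃}`. Since `f(x₄)`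
is odd in the readout weights it has mean zero, and `C` is the covariance of two sums over
independent blocks: only the `n` diagonal terms survive, and they are equal. Hence `C` is exactly
`n^{-2} ⬝ n = 1/n` times its value at width one.
-/

lemma hasTemperateGrowth_of_iteratedDeriv_le {E : Type*} [NormedAddCommGroup E] [NormedSpace ℝ E]
    {f : ℝ → E} (hf : ContDiff ℝ (⊤ : ℕ∞) f)
    (hbound : ∀ m : ℕ, ∃ C : ℝ, ∃ r : ℕ, ∀ t : ℝ, ‖iteratedDeriv m f t‖ ≤ C * (1 + |t|) ^ r) :
    f.HasTemperateGrowth := by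
  refine ⟨hf, fun m => ?_⟩
  obtain ⟨C, r, hC⟩ := hbound m
  exact ⟨r, C, fun t => norm_iteratedFDeriv_eq_norm_iteratedDeriv.trans_le (hC t)⟩

lemma hasTemperateGrowth_fderiv {E F : Type*} [NormedAddCommGroup E] [NormedSpace ℝ E]
    [NormedAddCommGroup F] [NormedSpace ℝ F] {f : E → F} (hf : f.HasTemperateGrowth) :
    (fderiv ℝ f).HasTemperateGrowth := by
  refine ⟨hf.1.fderiv_right (by simp), fun m => ?_⟩
  simpa only [norm_iteratedFDeriv_fderiv] using hf.2 (m + 1)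

section Gaussian

variable {E : Type*} [NormedAddCommGroup E] [NormedSpace ℝ E] [CompleteSpace E]
  [MeasurableSpace E] [BorelSpace E] [SecondCountableTopology E]

lemma integrable_of_hasTemperateGrowth {F : Type*} [NormedAddCommGroup F] [NormedSpace ℝ F]
    (μ : Measure E) [IsGaussian μ] {f : E → F} (hf : f.HasTemperateGrowth) :
    Integrable f μ := by
  obtain ⟨k, C, hC⟩ := hf.2 0
  have hmoment : MemLp (fun x : E => (1 : ℝ) + ‖x‖) k μ :=
    (memLp_const (1 : ℝ)).add (IsGaussian.memLp_id μ k (by simp)).norm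
  have hpow : Integrable (fun x : E => C * ‖(1 : ℝ) + ‖x‖‖ ^ k) μ :=
    hmoment.integrable_norm_pow'.const_mul C
  refine hpow.mono' hf.1.continuous.aestronglyMeasurable (.of_forall fun x => ?_)
  rw [Real.norm_of_nonneg (by positivity : 0 ≤ 1 + ‖x‖)]
  simpa only [norm_iteratedFDeriv_zero] using hC x

lemma memLp_two_of_hasTemperateGrowth (μ : Measure E) [IsGaussian μ] {f : E → ℝ}
    (hf : f.HasTemperateGrowth) : MemLp f 2 μ :=
  (memLp_two_iff_integrable_sq hf.1.continuous.aestronglyMeasurable).2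
    (integrable_of_hasTemperateGrowth μ (hf.pow 2))

lemma isGaussian_pi {ι : Type*} [Fintype ι] (μ : ι → Measure E) [∀ i, IsGaussian (μ i)] :
    IsGaussian (Measure.pi μ) := by
  have hindep : iIndepFun (fun i (x : ι → E) => x i) (Measure.pi μ) :=
    iIndepFun_pi (X := fun _ x => x) fun _ => aemeasurable_id
  have hlaw (i : ι) : HasGaussianLaw (fun x : ι → E => x i) (Measure.pi μ) :=
    ⟨by rw [(measurePreserving_eval μ i).map_eq]; infer_instance⟩
  simpa using (hindep.hasGaussianLaw hlaw).isGaussian_map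

end Gaussian

instance (d0 n : ℕ) : IsGaussian (gaussParam d0 n) :=
  isGaussian_pi _

section Probability

variable {Ω E : Type*} [MeasurableSpace Ω] [MeasurableSpace E] {μ : Measure Ω} {ν : Measure E}

lemma integral_eq_zero_of_comp_eq_neg {F : Type*} [NormedAddCommGroup F] [NormedSpace ℝ F]
    {e : Ω ≃ᵐ Ω} (he : MeasurePreserving e μ μ) {f : Ω → F} (hf : ∀ ω, f (e ω) = -f ω) :
    ∫ ω, f ω ∂μ = 0 := by
  have h := he.integral_comp' f
  simp only [hf, integral_neg] at h
  have : IsAddTorsionFree F := .of_isTorsionFree ℝ F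
  exact neg_eq_self.1 h

lemma covariance_sum_comp_of_pairwise_indepFun {ι : Type*} [Fintype ι] [IsFiniteMeasure μ]
    {X : ι → Ω → E} (hX : ∀ i, MeasurePreserving (X i) μ ν)
    (hindep : Pairwise fun i j => X i ⟂ᵢ[μ] X j) {F G : E → ℝ}
    (hF : MemLp F 2 ν) (hG : MemLp G 2 ν) :
    cov[fun ω => ∑ i, F (X i ω), fun ω => ∑ i, G (X i ω); μ] =
      Fintype.card ι * cov[F, G; ν] := by
  have hFX (i : ι) : MemLp (fun ω => F (X i ω)) 2 μ := hF.comp_measurePreserving (hX i)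
  have hGX (i : ι) : MemLp (fun ω => G (X i ω)) 2 μ := hG.comp_measurePreserving (hX i)
  have hdiag (i : ι) : cov[fun ω => F (X i ω), fun ω => G (X i ω); μ] = cov[F, G; ν] := by
    have hmap := (hX i).map_eq
    subst hmap
    exact (covariance_map_fun hF.1 hG.1 (hX i).aemeasurable).symm
  have hoff (i j : ι) (hij : j ≠ i) : cov[fun ω => F (X i ω), fun ω => G (X j ω); μ] = 0 := by
    refine IndepFun.covariance_eq_zero ((hindep hij.symm).comp₀ (hX i).aemeasurable
      (hX j).aemeasurable ?_ ?_) (hFX i) (hGX j)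
    · rw [(hX i).map_eq]; exact hF.aemeasurable
    · rw [(hX j).map_eq]; exact hG.aemeasurable
  rw [covariance_fun_sum_fun_sum hFX hGX]
  calc ∑ i, ∑ j, cov[fun ω => F (X i ω), fun ω => G (X j ω); μ]
      = ∑ _i : ι, cov[F, G; ν] := Finset.sum_congr rfl fun i _ => by
        rw [Fintype.sum_eq_single i (hoff i), hdiag]
    _ = Fintype.card ι * cov[F, G; ν] := by simp

end Probability

section HessianContraction

variable {ι : Type*} [Fintype ι] [DecidableEq ι]

/-- The gradient of `f` in coordinates: the vector of partial derivatives of `f` at `θ`. -/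
noncomputable def partials (f : (ι → ℝ) → ℝ) (θ : ι → ℝ) : ι → ℝ :=
  fun μ => fderiv ℝ f θ (Pi.single μ 1)

/-- The Hessian of `f₁` evaluated on the gradients of `f₂` and `f₃`, that is
`Σ_{μ,ν} ∂²f₁/∂θ_μ∂θ_ν ⬝ ∂f₂/∂θ_μ ⬝ ∂f₃/∂θ_ν`. It is written with an iterated `fderiv` so that the
chain rule applies without reference to coordinates. -/
noncomputable def hessianContraction (f₁ f₂ f₃ : (ι → ℝ) → ℝ) (θ : ι → ℝ) : ℝ :=
  fderiv ℝ (fderiv ℝ f₁) θ (partials f₂ θ) (partials f₃ θ)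

lemma hessianContraction_eq_sum (f₁ f₂ f₃ : (ι → ℝ) → ℝ) (θ : ι → ℝ) :
    hessianContraction f₁ f₂ f₃ θ = ∑ μ, ∑ ν,
      iteratedFDeriv ℝ 2 f₁ θ ![Pi.single μ 1, Pi.single ν 1] *
        fderiv ℝ f₂ θ (Pi.single μ 1) * fderiv ℝ f₃ θ (Pi.single ν 1) := by
  rw [hessianContraction, pi_eq_sum_univ' (partials f₂ θ), pi_eq_sum_univ' (partials f₃ θ)]
  simp only [map_sum, map_smul, sum_apply, smul_apply, smul_eq_mul, partials, Finset.mul_sum,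
    iteratedFDeriv_two_apply, Matrix.cons_val_zero, Matrix.cons_val_one]
  refine Finset.sum_comm.trans (Finset.sum_congr rfl fun μ _ => Finset.sum_congr rfl fun ν _ => ?_)
  ring

lemma hasTemperateGrowth_partials {f : (ι → ℝ) → ℝ} (hf : f.HasTemperateGrowth) :
    (partials f).HasTemperateGrowth := by
  let evalBasis : ((ι → ℝ) →L[ℝ] ℝ) →L[ℝ] (ι → ℝ) :=
    .pi fun μ => .apply ℝ ℝ (Pi.single μ 1)
  exact evalBasis.hasTemperateGrowth.comp (hasTemperateGrowth_fderiv hf)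

lemma hasTemperateGrowth_hessianContraction {f₁ f₂ f₃ : (ι → ℝ) → ℝ}
    (hf₁ : f₁.HasTemperateGrowth) (hf₂ : f₂.HasTemperateGrowth) (hf₃ : f₃.HasTemperateGrowth) :
    (hessianContraction f₁ f₂ f₃).HasTemperateGrowth := by
  have hhess := hasTemperateGrowth_fderiv (hasTemperateGrowth_fderiv hf₁)
  have hrow := (ContinuousLinearMap.id ℝ _).bilinear_hasTemperateGrowth hhess
    (hasTemperateGrowth_partials hf₂)
  exact (ContinuousLinearMap.id ℝ _).bilinear_hasTemperateGrowth hrow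
    (hasTemperateGrowth_partials hf₃)

end HessianContraction

section Block

variable {M ι κ : Type*} (e : ι × κ ≃ M)

/-- Coordinates indexed by `M ≃ ι × κ` split into blocks indexed by `ι`, each a copy of `κ → ℝ`;
`block e i` reads off the `i`-th one. -/
noncomputable def block (i : ι) : (M → ℝ) →L[ℝ] (κ → ℝ) :=
  .pi fun p => .proj (e (i, p))

@[simp]
lemma block_apply (i : ι) (θ : M → ℝ) (p : κ) : block e i θ p = θ (e (i, p)) := rfl

lemma block_single [DecidableEq M] [DecidableEq ι] [DecidableEq κ] (i j : ι) (p : κ) :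
    block e i (Pi.single (e (j, p)) 1) = if i = j then Pi.single p 1 else 0 := by
  ext q
  split_ifs with hij <;> simp [Pi.single_apply, hij]

section Measure

variable [Fintype M] (ν : Measure ℝ) [IsProbabilityMeasure ν]

lemma map_block_pi [Fintype ι] [Fintype κ] :
    (Measure.pi fun _ : M => ν).map (fun θ i => block e i θ) =
      Measure.pi fun _ : ι => Measure.pi fun _ : κ => ν := by
  have hreindex := (measurePreserving_piCongrLeft (fun _ : ι × κ => ν) e.symm).map_eq
  have hcurry := Measure.infinitePi_map_curry (fun (_ : ι) (_ : κ) => ν)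
  simp only [Measure.infinitePi_eq_pi] at hcurry
  rw [← hcurry, ← hreindex, Measure.map_map (by fun_prop) (by fun_prop)]
  have hblocks : (fun (θ : M → ℝ) i => block e i θ) =
      MeasurableEquiv.curry ι κ ℝ ∘ MeasurableEquiv.piCongrLeft (fun _ => ℝ) e.symm := by
    ext θ i p
    simp [MeasurableEquiv.curry, MeasurableEquiv.piCongrLeft, Equiv.piCongrLeft,
      Equiv.piCongrLeft']
  rw [hblocks]

lemma measurePreserving_block [Finite ι] [Fintype κ] (i : ι) :
    MeasurePreserving (block e i) (Measure.pi fun _ : M => ν) (Measure.pi fun _ : κ => ν) := by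
  have := Fintype.ofFinite ι
  exact (measurePreserving_eval (fun _ : ι => Measure.pi fun _ : κ => ν) i).comp
    ⟨by fun_prop, map_block_pi e ν⟩

lemma iIndepFun_block [Finite ι] [Finite κ] :
    iIndepFun (fun i => block e i) (Measure.pi fun _ : M => ν) := by
  have := Fintype.ofFinite ι
  have := Fintype.ofFinite κ
  rw [iIndepFun_iff_map_fun_eq_pi_map fun i => (measurePreserving_block e ν i).aemeasurable]
  simp_rw [(measurePreserving_block e ν _).map_eq, map_block_pi]

end Measure

section BlockSum

variable [Fintype ι] {c : ℝ} {g : (κ → ℝ) → ℝ}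

/-- The function `θ ↦ c Σ_i g(θ_i)` of the blocks `θ_i`: every block contributes through the same
function `g`, as the neurons of a hidden layer do. -/
noncomputable def blockSum (c : ℝ) (g : (κ → ℝ) → ℝ) (θ : M → ℝ) : ℝ :=
  c * ∑ i, g (block e i θ)

lemma fderiv_blockSum [Finite κ] (hg : Differentiable ℝ g) (θ : M → ℝ) :
    fderiv ℝ (blockSum e c g) θ = c • ∑ i, (fderiv ℝ g (block e i θ)).comp (block e i) := by
  have := Fintype.ofFinite κ
  have := Fintype.ofEquiv _ e
  exact ((HasFDerivAt.fun_sum fun i _ =>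
    (hg (block e i θ)).hasFDerivAt.comp θ (block e i).hasFDerivAt).const_mul c).fderiv

lemma fderiv_fderiv_blockSum [Fintype κ] (hg : ContDiff ℝ 2 g) (θ u v : M → ℝ) :
    fderiv ℝ (fderiv ℝ (blockSum e c g)) θ u v =
      c * ∑ i, fderiv ℝ (fderiv ℝ g) (block e i θ) (block e i u) (block e i v) := by
  have := Fintype.ofEquiv _ e
  have hd : Differentiable ℝ (fderiv ℝ g) :=
    (hg.fderiv_right (m := 1) (by norm_num)).differentiable (by simp)
  have hblock (i : ι) :
      HasFDerivAt (fun θ => (fderiv ℝ g (block e i θ)).comp (block e i)) _ θ :=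
    ((hd (block e i θ)).hasFDerivAt.comp θ (block e i).hasFDerivAt).clm_comp
      (hasFDerivAt_const (block e i) θ)
  have hsum := (HasFDerivAt.fun_sum fun i (_ : i ∈ Finset.univ) => hblock i).fun_const_smul c
  rw [funext (fderiv_blockSum e (hg.differentiable (by simp))), hsum.fderiv]
  simp

lemma covariance_blockSum [Fintype M] [Fintype κ] (ν : Measure ℝ) [IsProbabilityMeasure ν] (a b : ℝ)
    {F G : (κ → ℝ) → ℝ} (hF : MemLp F 2 (Measure.pi fun _ => ν))
    (hG : MemLp G 2 (Measure.pi fun _ => ν)) :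
    cov[blockSum e a F, blockSum e b G; Measure.pi fun _ => ν] =
      a * b * Fintype.card ι * cov[F, G; Measure.pi fun _ => ν] := by
  unfold blockSum
  rw [covariance_const_mul_left, covariance_const_mul_right,
    covariance_sum_comp_of_pairwise_indepFun (measurePreserving_block e ν)
      (fun i j hij => (iIndepFun_block e ν).indepFun hij) hF hG]
  ring

variable [DecidableEq M] [DecidableEq κ]

lemma block_partials_blockSum [Finite κ] (hg : Differentiable ℝ g) (θ : M → ℝ) (k : ι) :
    block e k (partials (blockSum e c g) θ) = c • partials g (block e k θ) := by
  classical
  ext p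
  simp only [block_apply, partials, fderiv_blockSum e hg, smul_apply,
    sum_apply, ContinuousLinearMap.comp_apply, block_single, Pi.smul_apply]
  rw [Fintype.sum_eq_single k fun i hi => by rw [if_neg hi, map_zero], if_pos rfl]

lemma hessianContraction_blockSum [Fintype κ] {c₁ c₂ c₃ : ℝ} {g₁ g₂ g₃ : (κ → ℝ) → ℝ}
    (hg₁ : ContDiff ℝ 2 g₁) (hg₂ : Differentiable ℝ g₂) (hg₃ : Differentiable ℝ g₃) :
    hessianContraction (blockSum e c₁ g₁) (blockSum e c₂ g₂) (blockSum e c₃ g₃) =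
      blockSum e (c₁ * c₂ * c₃) (hessianContraction g₁ g₂ g₃) := by
  ext θ
  simp only [hessianContraction, fderiv_fderiv_blockSum e hg₁, block_partials_blockSum e hg₂,
    block_partials_blockSum e hg₃, map_smul, smul_apply, smul_eq_mul,
    ← Finset.mul_sum, blockSum]
  ring

end BlockSum

end Block

section Network

variable {σ : ℝ → ℝ} {d0 : ℕ}

/-- Groups the parameters by neuron: the `i`-th block consists of `w_i` and `v_i`, laid out like the
parameters of a network of width one. -/
def neuronEquiv (d0 n : ℕ) : Fin n × Param d0 1 ≃ Param d0 n where
  toFun q := q.2.map (fun w => (q.1, w.2)) (fun _ => q.1)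
  invFun := Sum.elim (fun w => (w.1, .inl (0, w.2))) (fun i => (i, .inr 0))
  left_inv := by
    rintro ⟨i, ⟨a, j⟩ | a⟩ <;> simp [Subsingleton.elim a 0]
  right_inv := by
    rintro (⟨i, j⟩ | i) <;> rfl

lemma net_eq_blockSum (n : ℕ) (x : Fin d0 → ℝ) :
    (fun θ => net σ d0 n θ x) =
      blockSum (neuronEquiv d0 n) (Real.sqrt n)⁻¹ (fun η => net σ d0 1 η x) := by
  ext θ
  simp [net, blockSum, neuronEquiv]

lemma hasTemperateGrowth_net (hσ : σ.HasTemperateGrowth) (n : ℕ) (x : Fin d0 → ℝ) :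
    (fun θ => net σ d0 n θ x).HasTemperateGrowth := by
  have hcoord (μ : Param d0 n) : (fun θ : Param d0 n → ℝ => θ μ).HasTemperateGrowth :=
    (ContinuousLinearMap.proj (R := ℝ) (φ := fun _ : Param d0 n => ℝ) μ).hasTemperateGrowth
  have hpre (i : Fin n) : (fun θ : Param d0 n → ℝ =>
      (Real.sqrt d0)⁻¹ * ∑ j, θ (.inl (i, j)) * x j).HasTemperateGrowth :=
    .mul (.const _) (.sum fun _ _ => (hcoord _).mul (.const _))
  exact .mul (.const _) (.sum fun i _ => (hcoord _).mul (hσ.comp (hpre i)))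

/-- The symmetry `v ↦ -v` of the parameters, under which the network is odd. -/
def negReadout (d0 n : ℕ) : (Param d0 n → ℝ) ≃ᵐ (Param d0 n → ℝ) :=
  .piCongrRight (Sum.rec (fun _ => .refl ℝ) fun _ => .neg ℝ)

@[simp]
lemma negReadout_inl {d0 n : ℕ} (θ : Param d0 n → ℝ) (q : Fin n × Fin d0) :
    negReadout d0 n θ (.inl q) = θ (.inl q) := rfl

@[simp]
lemma negReadout_inr {d0 n : ℕ} (θ : Param d0 n → ℝ) (i : Fin n) :
    negReadout d0 n θ (.inr i) = -θ (.inr i) := rfl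

lemma measurePreserving_negReadout (d0 n : ℕ) :
    MeasurePreserving (negReadout d0 n) (gaussParam d0 n) (gaussParam d0 n) := by
  refine measurePreserving_pi _ _ ?_
  rintro (_ | _)
  · exact .id _
  · exact ⟨measurable_neg, by simpa using gaussianReal_map_neg (μ := 0) (v := 1)⟩

lemma integral_net (σ : ℝ → ℝ) (n : ℕ) (x : Fin d0 → ℝ) :
    ∫ θ, net σ d0 n θ x ∂gaussParam d0 n = 0 :=
  integral_eq_zero_of_comp_eq_neg (measurePreserving_negReadout d0 n) fun θ => by
    simp [net]

lemma corrDTheta_eq_covariance (hσ : σ.HasTemperateGrowth) (n : ℕ) (x₁ x₂ x₃ x₄ : Fin d0 → ℝ) :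
    corrDTheta σ d0 n x₁ x₂ x₃ x₄ =
      cov[hessianContraction (fun θ => net σ d0 n θ x₁) (fun θ => net σ d0 n θ x₂)
          (fun θ => net σ d0 n θ x₃),
        fun θ => net σ d0 n θ x₄; gaussParam d0 n] := by
  have hnet (x : Fin d0 → ℝ) := hasTemperateGrowth_net hσ n x
  rw [covariance_eq_sub
    (memLp_two_of_hasTemperateGrowth _
      (hasTemperateGrowth_hessianContraction (hnet x₁) (hnet x₂) (hnet x₃)))
    (memLp_two_of_hasTemperateGrowth _ (hnet x₄)), integral_net, mul_zero, sub_zero]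
  simp only [corrDTheta, Pi.mul_apply, hessianContraction_eq_sum, Finset.sum_mul]

lemma corrDTheta_eq_corrDTheta_one_div (hσ : σ.HasTemperateGrowth) (n : ℕ)
    (x₁ x₂ x₃ x₄ : Fin d0 → ℝ) :
    corrDTheta σ d0 n x₁ x₂ x₃ x₄ = corrDTheta σ d0 1 x₁ x₂ x₃ x₄ / n := by
  have hnet (x : Fin d0 → ℝ) := hasTemperateGrowth_net hσ 1 x
  have hsmooth (x : Fin d0 → ℝ) : ContDiff ℝ 2 fun η => net σ d0 1 η x :=
    contDiff_infty.1 (hnet x).1 2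
  have hdiff (x : Fin d0 → ℝ) := (hsmooth x).differentiable two_ne_zero
  have hscale : (Real.sqrt n)⁻¹ * (Real.sqrt n)⁻¹ * (Real.sqrt n)⁻¹ * (Real.sqrt n)⁻¹ * n =
      (n : ℝ)⁻¹ := by
    calc _ = ((Real.sqrt n ^ 2)⁻¹) ^ 2 * n := by ring
      _ = (n : ℝ)⁻¹ := by rw [Real.sq_sqrt n.cast_nonneg]; field_simp
  rw [corrDTheta_eq_covariance hσ n,
    net_eq_blockSum n x₁, net_eq_blockSum n x₂, net_eq_blockSum n x₃, net_eq_blockSum n x₄,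
    hessianContraction_blockSum _ (hsmooth x₁) (hdiff x₂) (hdiff x₃), gaussParam,
    covariance_blockSum _ _ _ _ (memLp_two_of_hasTemperateGrowth (gaussParam d0 1)
      (hasTemperateGrowth_hessianContraction (hnet x₁) (hnet x₂) (hnet x₃)))
      (memLp_two_of_hasTemperateGrowth (gaussParam d0 1) (hnet x₄)),
    Fintype.card_fin, hscale, corrDTheta_eq_covariance hσ 1, div_eq_inv_mul, gaussParam]

end Network

/-- the correlation function appearing in `E_θ[dΘ/dt]` for a
one-hidden-layer network with smooth activation, all of whose derivatives are polynomially
bounded, is `O(1/n)`. -/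
theorem one_hidden_layer_dNTK_correlator (σ : ℝ → ℝ) (hσs : ContDiff ℝ (⊤ : ℕ∞) σ)
    (hσp : ∀ m : ℕ, ∃ C : ℝ, ∃ r : ℕ, ∀ t : ℝ, |iteratedDeriv m σ t| ≤ C * (1 + |t|) ^ r)
    (d0 : ℕ) (hd0 : 0 < d0) (x₁ x₂ x₃ x₄ : Fin d0 → ℝ) :
    ∃ K : ℝ, ∀ n : ℕ, 1 ≤ n →
      |corrDTheta σ d0 n x₁ x₂ x₃ x₄| ≤ K / (n : ℝ) := by
  have hσ : σ.HasTemperateGrowth := hasTemperateGrowth_of_iteratedDeriv_le hσs hσp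
  refine ⟨|corrDTheta σ d0 1 x₁ x₂ x₃ x₄|, fun n _ => ?_⟩
  rw [corrDTheta_eq_corrDTheta_one_div hσ, abs_div, Nat.abs_cast]

end OneHiddenLayer
end
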